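/- arXiv:2210.12545 — 8 statements merged into one kernel-verified Lean document; each statement's English description precedes it below -/
import Mathlib

section
/- Define the sequence c : ℕ → ℝ by c(1) = √2 and c(n+1) = √(2 + c(n)) for n ≥ 1. Then the partial products ∏_{n=1}^{N} (c(n)/2) converge, as N → ∞, to 2/π (Viète's formula for π). -/
open Filter

/-- Viète's formula for π: the partial products `∏_{n=1}^N c n / 2` of the
nested radicals `c 1 = √2`, `c (n+1) = √(2 + c n)` converge to `2/π`. -/
theorem viete_formula_pi (c : ℕ → ℝ)
    (h1 : c 1 = Real.sqrt 2)
    (hrec : ∀ n, 1 ≤ n → c (n + 1) = Real.sqrt (2 + c n)) :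
    Tendsto (fun N : ℕ => ∏ n ∈ Finset.Icc 1 N, c n / 2) atTop
      (nhds (2 / Real.pi)) := by
  have hc : ∀ n, c (n + 1) = Real.sqrtTwoAddSeries 0 (n + 1) := by
    intro n
    induction n with
    | zero => simp [h1]
    | succ k ih => rw [hrec (k + 1) (by omega), ih]; rfl
  have hpi := Real.pi_pos
  have hinv : ∀ N : ℕ, (∏ n ∈ Finset.Icc 1 N, c n / 2) * Real.sinc (Real.pi / 2 ^ (N + 1))
      = 2 / Real.pi := by
    intro N
    induction N with
    | zero =>
      rw [Real.sinc_of_ne_zero (by positivity)]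
      simp
    | succ k ih =>
      rw [Finset.prod_Icc_succ_top (by omega), ← ih, hc, ← Real.cos_pi_over_two_pow, mul_assoc]
      congr 1
      rw [Real.sinc_of_ne_zero (by positivity), Real.sinc_of_ne_zero (by positivity)]
      have h2 : Real.pi / 2 ^ (k + 1) = 2 * (Real.pi / 2 ^ (k + 1 + 1)) := by
        field_simp; ring
      have h3 : Real.pi / 2 ^ (k + 1 + 1) ≠ 0 := by positivity
      rw [h2, Real.sin_two_mul]
      generalize Real.pi / 2 ^ (k + 1 + 1) = x at h3
      field_simp
  have hx : Tendsto (fun N : ℕ => Real.pi / 2 ^ (N + 1)) atTop (nhds 0) :=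
    Tendsto.div_atTop tendsto_const_nhds
      ((tendsto_pow_atTop_atTop_of_one_lt (by norm_num : (1 : ℝ) < 2)).comp
        (tendsto_add_atTop_nat 1))
  have hs : Tendsto (fun N : ℕ => Real.sinc (Real.pi / 2 ^ (N + 1))) atTop (nhds 1) := by
    have := (Real.continuous_sinc.tendsto 0).comp hx
    rwa [Real.sinc_zero] at this
  have hd := (tendsto_const_nhds (x := 2 / Real.pi)).div hs one_ne_zero
  rw [div_one] at hd
  refine hd.congr fun N => ?_
  have hne : Real.sinc (Real.pi / 2 ^ (N + 1)) ≠ 0 := by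
    intro h
    have := hinv N
    rw [h, mul_zero] at this
    have : 0 < 2 / Real.pi := by positivity
    linarith
  simp only [Pi.div_apply]
  rw [div_eq_iff hne, hinv N]
end

section
/- The infinite product ∏_{n=1}^{∞} cos(π / 2^{n+1}) converges to 2/π; that is, the partial products ∏_{n=1}^{N} cos(π/2^{n+1}) tend to 2/π as N → ∞. -/
open Filter

theorem viete_aux (N : ℕ) :
    (∏ n ∈ Finset.Icc 1 N, Real.cos (Real.pi / 2 ^ (n + 1))) *
      (2 ^ N * Real.sin (Real.pi / 2 ^ (N + 1))) = 1 := by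
  induction N with
  | zero => simp
  | succ k ih =>
    rw [Finset.prod_Icc_succ_top (by omega)]
    have h : Real.pi / 2 ^ (k + 1) = 2 * (Real.pi / 2 ^ (k + 1 + 1)) := by
      field_simp
      ring
    have h2 : Real.sin (Real.pi / 2 ^ (k + 1)) =
        2 * Real.sin (Real.pi / 2 ^ (k + 1 + 1)) * Real.cos (Real.pi / 2 ^ (k + 1 + 1)) := by
      rw [h, Real.sin_two_mul]
    rw [h2] at ih
    rw [← ih]
    ring

/-- The trigonometric form of Viète's product:
`∏_{n=1}^∞ cos(π / 2^(n+1)) = 2/π`. -/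
theorem viete_product_cos :
    Tendsto (fun N : ℕ => ∏ n ∈ Finset.Icc 1 N, Real.cos (Real.pi / 2 ^ (n + 1)))
      atTop (nhds (2 / Real.pi)) := by
  have hx : Tendsto (fun N : ℕ => Real.pi / 2 ^ (N + 1)) atTop (nhds 0) := by
    have h1 : Tendsto (fun N : ℕ => (2 : ℝ) ^ (N + 1)) atTop atTop :=
      (tendsto_pow_atTop_atTop_of_one_lt (by norm_num)).comp (tendsto_add_atTop_nat 1)
    exact h1.const_div_atTop Real.pi
  have hs : Tendsto (fun N : ℕ => Real.sinc (Real.pi / 2 ^ (N + 1))) atTop (nhds 1) := by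
    have := (Real.continuous_sinc.tendsto 0).comp hx
    rwa [Real.sinc_zero] at this
  have hl := (hs.const_mul (Real.pi / 2)).inv₀ (by simp [Real.pi_ne_zero])
  have he : (Real.pi / 2 * 1)⁻¹ = 2 / Real.pi := by simp
  rw [he] at hl
  refine hl.congr fun N => ?_
  have hne : Real.pi / 2 ^ (N + 1) ≠ 0 := by positivity
  have hq : Real.pi / 2 * Real.sinc (Real.pi / 2 ^ (N + 1)) =
      2 ^ N * Real.sin (Real.pi / 2 ^ (N + 1)) := by
    rw [Real.sinc_of_ne_zero hne]
    have := Real.pi_ne_zero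
    generalize Real.sin (Real.pi / 2 ^ (N + 1)) = s
    field_simp
    ring
  rw [hq]
  exact (eq_inv_of_mul_eq_one_left (viete_aux N)).symm
end

section
/- For every real number x ≠ 0, the infinite product ∏_{n=1}^{∞} cos(x / 2^n) converges to sin(x)/x; that is, the partial products ∏_{n=1}^{N} cos(x/2^n) tend to sin(x)/x as N → ∞ (Euler's generalization of Viète's formula). -/
open Filter

theorem euler_aux (x : ℝ) (hx : x ≠ 0) (N : ℕ) :
    (∏ n ∈ Finset.Icc 1 N, Real.cos (x / 2 ^ n)) * Real.sinc (x / 2 ^ N) = Real.sin x / x := by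
  induction N with
  | zero => simp [Real.sinc_of_ne_zero hx]
  | succ k ih =>
    rw [← ih, Finset.prod_Icc_succ_top (by omega), mul_assoc]
    congr 1
    have h2 : x / 2 ^ k = 2 * (x / 2 ^ (k + 1)) := by
      rw [pow_succ]; field_simp
    have h0 : x / 2 ^ (k + 1) ≠ 0 := by positivity
    rw [h2, Real.sinc_of_ne_zero h0, Real.sinc_of_ne_zero (mul_ne_zero two_ne_zero h0),
      Real.sin_two_mul]
    generalize x / 2 ^ (k + 1) = y at h0
    field_simp

/-- Euler's generalization of Viète's formula: for `x ≠ 0`,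
`∏_{n=1}^∞ cos(x / 2^n) = sin x / x`. -/
theorem euler_product_cos (x : ℝ) (hx : x ≠ 0) :
    Tendsto (fun N : ℕ => ∏ n ∈ Finset.Icc 1 N, Real.cos (x / 2 ^ n))
      atTop (nhds (Real.sin x / x)) := by
  have h1 : Tendsto (fun N : ℕ => x / 2 ^ N) atTop (nhds 0) :=
    tendsto_const_nhds.div_atTop (tendsto_pow_atTop_atTop_of_one_lt one_lt_two)
  have h2 : Tendsto (fun N : ℕ => Real.sinc (x / 2 ^ N)) atTop (nhds 1) := by
    have := (Real.continuous_sinc.tendsto 0).comp h1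
    rwa [Real.sinc_zero] at this
  have h3 : Tendsto (fun N : ℕ => Real.sin x / x / Real.sinc (x / 2 ^ N)) atTop
      (nhds (Real.sin x / x / 1)) := tendsto_const_nhds.div h2 one_ne_zero
  rw [div_one] at h3
  refine h3.congr' ?_
  filter_upwards [h2.eventually_ne one_ne_zero] with N hN
  rw [← euler_aux x hx N, mul_div_cancel_right₀ _ hN]
end

section
/- In the Euclidean plane, let B, D, E, G, F be points and r > 0 a real number such that: dist(B, D) = dist(B, E) = dist(B, G) = r (so D, E, G lie on the circle of center B and radius r); F lies on the line through D and B with B strictly between D and F; G lies strictly between F and E; and dist(F, G) = r. Assume the configuration is nondegenerate (F ≠ B, E ≠ B, D ≠ B, the points F, G, E are not collinear with B unless forced). Then the angle ∠DBE equals three times the angle ∠GFB; that is, the angle at F trisects the given angle at the center B (Viète, Supplementum Geometriae, Proposition IX: trisection of an angle by neusis). -/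
open EuclideanGeometry

/-- Viète's Proposition IX (trisection of an angle by neusis): with `D`, `E`, `G` on the
circle of center `B` and radius `r`, `B` strictly between `D` and `F`, `G` strictly
between `F` and `E`, and `dist F G = r`, the angle `∠DBE` equals three times `∠GFB`. -/
theorem viete_trisection (B D E G F : EuclideanSpace ℝ (Fin 2)) (r : ℝ) (hr : 0 < r)
    (hD : dist B D = r) (hE : dist B E = r) (hG : dist B G = r)
    (hDBF : Sbtw ℝ D B F) (hFGE : Sbtw ℝ F G E) (hFG : dist F G = r)
    (hFB : F ≠ B) (hEB : E ≠ B) (hDB : D ≠ B) :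
    ∠ D B E = 3 * ∠ G F B := by
  have hGE : G ≠ E := hFGE.ne_right
  have hGF : G ≠ F := hFGE.ne_left
  have hGB : G ≠ B := by
    rintro rfl
    simp at hG
    linarith
  have hEF : E ≠ F := hFGE.left_ne_right.symm
  have h1 : ∠ G F B = ∠ G B F :=
    angle_eq_angle_of_dist_eq (by rw [dist_comm G F, dist_comm G B, hFG, hG])
  have h2 : ∠ B G E = ∠ B E G := angle_eq_angle_of_dist_eq (by rw [hG, hE])
  have s1 : ∠ G F B + ∠ F B G + ∠ B G F = Real.pi := angle_add_angle_add_angle_eq_pi B hGF.symm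
  have s2 : ∠ E F B + ∠ F B E + ∠ B E F = Real.pi := angle_add_angle_add_angle_eq_pi B hEF.symm
  have l1 : ∠ B G F + ∠ B G E = Real.pi :=
    angle_add_angle_eq_pi_of_angle_eq_pi B hFGE.angle₁₂₃_eq_pi
  have l2 : ∠ E B D + ∠ E B F = Real.pi :=
    angle_add_angle_eq_pi_of_angle_eq_pi E hDBF.angle₁₂₃_eq_pi
  have e1 : ∠ G F B = ∠ E F B := hFGE.angle_eq_left B
  have e2 : ∠ B E F = ∠ B E G := (hFGE.symm.angle_eq_right B).symm
  rw [angle_comm D B E]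
  rw [angle_comm F B G] at s1
  rw [angle_comm F B E] at s2
  linarith
end

section
/- The cubic equation x^3 − (7/3)·x = 7/27 has exactly one real root x in the open interval (4/3, 5/3). -/
/-- The cubic `x³ − (7/3)x = 7/27` has exactly one real root in the open
interval `(4/3, 5/3)`. -/
theorem heptagon_cubic_unique_root :
    ∃! x : ℝ, x ∈ Set.Ioo (4 / 3 : ℝ) (5 / 3) ∧
      x ^ 3 - (7 / 3) * x = 7 / 27 := by
  have hc : ContinuousOn (fun x : ℝ => x ^ 3 - (7 / 3) * x) (Set.Icc (4 / 3) (5 / 3)) := by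
    fun_prop
  have h := intermediate_value_Ioo (by norm_num : (4 / 3 : ℝ) ≤ 5 / 3) hc
  obtain ⟨x, hx, hfx⟩ := h (show (7 / 27 : ℝ) ∈ _ by constructor <;> norm_num)
  have hfx' : x ^ 3 - (7 / 3) * x = 7 / 27 := hfx
  refine ⟨x, ⟨hx, hfx'⟩, ?_⟩
  rintro y ⟨hy, hfy⟩
  have hx1 := hx.1
  have hy1 := hy.1
  have hm : (y - x) * (y ^ 2 + x * y + x ^ 2 - 7 / 3) = 0 := by
    linear_combination hfy - hfx'
  rcases mul_eq_zero.mp hm with h0 | h0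
  · linarith
  · nlinarith
end

section
/- Let x = (2·√7/3)·cos((1/3)·arccos(1/(2·√7))). Then x satisfies x^3 − (7/3)·x = 7/27. That is, the cubic arising in Viète's heptagon construction is solved by trisecting the angle arccos(1/(2√7)). -/
/-- The cubic of Viète's heptagon construction is solved by angle trisection:
`x = (2√7/3)·cos((1/3)·arccos(1/(2√7)))` satisfies `x³ − (7/3)x = 7/27`. -/
theorem heptagon_cubic_solved_by_trisection (x : ℝ)
    (hx : x = (2 * Real.sqrt 7 / 3) *
      Real.cos ((1 / 3) * Real.arccos (1 / (2 * Real.sqrt 7)))) :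
    x ^ 3 - (7 / 3) * x = 7 / 27 := by
  have hs : Real.sqrt 7 ^ 2 = 7 := Real.sq_sqrt (by norm_num)
  have hpos : 0 < Real.sqrt 7 := Real.sqrt_pos.mpr (by norm_num)
  have h1 : 1 ≤ Real.sqrt 7 := by nlinarith
  have hle : 1 / (2 * Real.sqrt 7) ≤ 1 := by
    rw [div_le_one (by positivity)]; linarith
  have hge : -1 ≤ 1 / (2 * Real.sqrt 7) := by
    have : 0 < 1 / (2 * Real.sqrt 7) := by positivity
    linarith
  have hc := Real.cos_three_mul ((1 / 3) * Real.arccos (1 / (2 * Real.sqrt 7)))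
  rw [show 3 * ((1 / 3) * Real.arccos (1 / (2 * Real.sqrt 7)))
    = Real.arccos (1 / (2 * Real.sqrt 7)) by ring, Real.cos_arccos hge hle] at hc
  rw [hx]
  generalize Real.cos ((1 / 3) * Real.arccos (1 / (2 * Real.sqrt 7))) = c at hc ⊢
  have hm : 2 * Real.sqrt 7 * (4 * c ^ 3 - 3 * c) = 1 := by
    rw [← hc]; field_simp
  linear_combination (7 / 27) * hm + (8 / 27) * Real.sqrt 7 * c ^ 3 * hs
end

section
/- The real number y = 2·cos(2π/7) satisfies the cubic equation y^3 + y^2 − 2y − 1 = 0. -/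
/-- The cyclotomic cubic of the heptagon: `y = 2 cos (2π/7)` satisfies
`y³ + y² − 2y − 1 = 0`. -/
theorem two_cos_two_pi_div_seven_root (y : ℝ)
    (hy : y = 2 * Real.cos (2 * Real.pi / 7)) :
    y ^ 3 + y ^ 2 - 2 * y - 1 = 0 := by
  have hpi := Real.pi_pos
  have hlt : Real.cos (2 * Real.pi / 7) < 1 := by
    rw [← Real.cos_zero]
    exact Real.cos_lt_cos_of_nonneg_of_le_pi le_rfl (by linarith) (by linarith)
  have h3 := Real.cos_three_mul (2 * Real.pi / 7)
  have h2 := Real.cos_two_mul (2 * Real.pi / 7)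
  have h4 := Real.cos_two_mul (2 * (2 * Real.pi / 7))
  have heq : Real.cos (2 * (2 * (2 * Real.pi / 7))) = Real.cos (3 * (2 * Real.pi / 7)) := by
    rw [← Real.cos_two_pi_sub]
    congr 1
    ring
  rw [heq, h3, h2] at h4
  subst hy
  generalize Real.cos (2 * Real.pi / 7) = c at *
  have hc : c - 1 ≠ 0 := by linarith
  apply mul_left_cancel₀ hc
  linear_combination -h4
end

section
/- The real number x = 2·cos(2π/7) + 1/3 satisfies the cubic equation x^3 − (7/3)·x = 7/27. That is, the depressed form (via the substitution y = x − 1/3) of the cyclotomic cubic y^3 + y^2 − 2y − 1 = 0 for y = 2cos(2π/7) is exactly the cubic arising in Viète's construction of the regular heptagon. -/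
/-- `x = 2 cos (2π/7) + 1/3` satisfies the cubic `x³ − (7/3)x = 7/27` arising in
Viète's construction of the regular heptagon. -/
theorem heptagon_cubic_root_from_cos (x : ℝ)
    (hx : x = 2 * Real.cos (2 * Real.pi / 7) + 1 / 3) :
    x ^ 3 - (7 / 3) * x = 7 / 27 := by
  have hpi := Real.pi_pos
  have h1 : Real.cos (2 * Real.pi / 7) < 1 := by
    rw [← Real.cos_zero]
    exact Real.cos_lt_cos_of_nonneg_of_le_pi le_rfl (by linarith) (by linarith)
  have h3 := Real.cos_three_mul (2 * Real.pi / 7)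
  have h2 := Real.cos_two_mul (2 * Real.pi / 7)
  have h4 := Real.cos_two_mul (2 * (2 * Real.pi / 7))
  have h34 : Real.cos (2 * (2 * (2 * Real.pi / 7))) = Real.cos (3 * (2 * Real.pi / 7)) := by
    rw [← Real.cos_two_pi_sub]
    congr 1
    ring
  rw [h34, h3, h2] at h4
  generalize Real.cos (2 * Real.pi / 7) = c at *
  have h : (c - 1) * (8 * c ^ 3 + 4 * c ^ 2 - 4 * c - 1) = 0 := by linear_combination -h4
  rcases mul_eq_zero.mp h with h | h
  · linarith
  · subst hx
    linear_combination h
end
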